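/- Let F be a field, V a finite set, and A a skew-symmetric matrix over F indexed by V. Let T ⊆ V, let k be the rank of the submatrix of A consisting of the columns indexed by T, let q be a natural number, and let 𝒮 be a family of q-element subsets of V. Then there exists a subfamily 𝒮' ⊆ 𝒮 with |𝒮'| ≤ binomial(2·k·q + q·(q−1)/2 + q, q) such that for every X ⊆ T: if some Y ∈ 𝒮 extends X with respect to A, then some Y' ∈ 𝒮' extends X with respect to A. -/

import Mathlib

/-- The principal submatrix `A[S]` of a matrix `A` indexed by `V`, for `S ⊆ V`. -/
def principalSub {V F : Type*} (A : Matrix V V F) (S : Finset V) : Matrix ↥S ↥S F :=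
  A.submatrix (fun x => (x : V)) (fun x => (x : V))

/-- `Y` extends `X` with respect to `A`: `X ∩ Y = ∅` and `A[X ∪ Y]` is nonsingular. -/
def ExtendsIn {V F : Type*} [DecidableEq V] [Field F] (A : Matrix V V F)
    (X Y : Finset V) : Prop :=
  X ∩ Y = ∅ ∧ (principalSub A (X ∪ Y)).det ≠ 0

open Matrix

lemma det_alt_sq {K : Type*} [Field K] (n : ℕ) : ∀ {m : Type*} [Fintype m] [DecidableEq m]
    (M : Matrix m m K), Fintype.card m = n → (∀ u v, M u v = - M v u) → (∀ v, M v v = 0) →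
    ∃ p : K, M.det = p ^ 2 := by
  induction n using Nat.strong_induction_on with
  | _ n ih =>
  intro m _ _ M hm hs hd
  by_cases h0 : ∀ i j, M i j = 0
  · have : M = 0 := by ext i j; exact h0 i j
    subst this
    rcases isEmpty_or_nonempty m with h | h
    · exact ⟨1, by simp⟩
    · exact ⟨0, by simp [Matrix.det_zero]⟩
  push Not at h0
  obtain ⟨i, j, hij⟩ := h0
  have hne : i ≠ j := by rintro rfl; exact hij (hd _)
  let p : m → Prop := fun x => x = i ∨ x = j
  let f : Fin 2 → {a // p a} := ![⟨i, Or.inl rfl⟩, ⟨j, Or.inr rfl⟩]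
  have hf : Function.Bijective f := by
    constructor
    · intro a b hab
      have hne' := hne.symm
      fin_cases a <;> fin_cases b <;> simp [f, hne, hne'] at hab ⊢
    · rintro ⟨x, rfl | rfl⟩
      · exact ⟨0, rfl⟩
      · exact ⟨1, rfl⟩
  let e : Fin 2 ⊕ {a // ¬ p a} ≃ m :=
    ((Equiv.ofBijective f hf).sumCongr (Equiv.refl _)).trans (Equiv.sumCompl p)
  have he0 : e (Sum.inl 0) = i := rfl
  have he1 : e (Sum.inl 1) = j := rfl
  let M' := M.submatrix e e
  have hs' : ∀ u v, M' u v = - M' v u := fun u v => hs _ _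
  have hd' : ∀ u, M' u u = 0 := fun u => hd _
  have ha : M' (Sum.inl 0) (Sum.inl 1) ≠ 0 := hij
  have hdet : M.det = M'.det := (Matrix.det_submatrix_equiv_self e M).symm
  have hcard : Fintype.card {a // ¬ p a} < n := by
    rw [← hm, ← Fintype.card_congr e]; simp
  clear_value M'
  set a := M' (Sum.inl 0) (Sum.inl 1) with haa
  let N : Matrix (Fin 2) (Fin 2) K := !![0, -a⁻¹; a⁻¹, 0]
  have hA : M'.toBlocks₁₁ = !![0, a; -a, 0] := by
    ext x y
    fin_cases x <;> fin_cases y <;> simp [Matrix.toBlocks₁₁, hd', haa]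
    exact hs' _ _
  have hinv : M'.toBlocks₁₁ * N = 1 := by
    rw [hA]; ext x y
    fin_cases x <;> fin_cases y <;> simp [N, Matrix.mul_apply, ha]
  let _ : Invertible M'.toBlocks₁₁ := ⟨N, mul_eq_one_comm.mp hinv, hinv⟩
  have hN : ⅟ M'.toBlocks₁₁ = N := rfl
  have h2 := Matrix.det_fromBlocks₁₁ M'.toBlocks₁₁ M'.toBlocks₁₂ M'.toBlocks₂₁ M'.toBlocks₂₂
  rw [Matrix.fromBlocks_toBlocks, hN] at h2
  obtain ⟨r, hr⟩ := ih _ hcard (M'.toBlocks₂₂ - M'.toBlocks₂₁ * N * M'.toBlocks₁₂) rfl (by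
      intro u v
      simp [Matrix.mul_apply, Fin.sum_univ_two, N, toBlocks₂₂, toBlocks₂₁, toBlocks₁₂]
      rw [hs' (Sum.inr u) (Sum.inr v), hs' (Sum.inr u) (Sum.inl 0), hs' (Sum.inr u) (Sum.inl 1),
        hs' (Sum.inr v) (Sum.inl 0), hs' (Sum.inr v) (Sum.inl 1)]
      ring) (by
      intro u
      simp [Matrix.mul_apply, Fin.sum_univ_two, N, toBlocks₂₂, toBlocks₂₁, toBlocks₁₂]
      rw [hd', hs' (Sum.inr u) (Sum.inl 0), hs' (Sum.inr u) (Sum.inl 1)]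
      ring)
  refine ⟨a * r, ?_⟩
  rw [hdet, h2, hr, hA, Matrix.det_fin_two]
  simp; ring

lemma det_alt_sq_poly {F σ : Type*} [Field F] {m : Type*} [Fintype m] [DecidableEq m]
    (M : Matrix m m (MvPolynomial σ F)) (hs : ∀ u v, M u v = - M v u) (hd : ∀ v, M v v = 0) :
    ∃ p : MvPolynomial σ F, M.det = p ^ 2 := by
  let K := FractionRing (MvPolynomial σ F)
  obtain ⟨r, hr⟩ := det_alt_sq (K := K) _ ((algebraMap (MvPolynomial σ F) K).mapMatrix M) rfl
    (fun u v => by simp [hs u v]) (fun v => by simp [hd])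
  rw [← RingHom.map_det] at hr
  obtain ⟨a, b, hb, rfl⟩ := IsFractionRing.div_surjective (A := MvPolynomial σ F) r
  have hb0 : b ≠ 0 := nonZeroDivisors.ne_zero hb
  have hb0' : algebraMap (MvPolynomial σ F) K b ≠ 0 := by
    simpa using hb0
  rw [div_pow, eq_div_iff (pow_ne_zero _ hb0'), ← map_pow, ← map_pow, ← map_mul] at hr
  have hr' := IsFractionRing.injective (MvPolynomial σ F) K hr
  have hdvd : b ∣ a := (IsIntegrallyClosed.pow_dvd_pow_iff two_ne_zero).mp ⟨M.det, by rw [← hr', mul_comm]⟩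
  obtain ⟨c, rfl⟩ := hdvd
  refine ⟨c, ?_⟩
  have : b ^ 2 ≠ 0 := pow_ne_zero _ hb0
  apply mul_right_cancel₀ this
  rw [hr']; ring

lemma totalDegree_of_sq {F σ : Type*} [Field F] (p : MvPolynomial σ F) (q : ℕ)
    (h : (p ^ 2).totalDegree ≤ 2 * q) : p.totalDegree ≤ q := by
  by_cases h0 : p = 0
  · simp [h0]
  rw [sq, MvPolynomial.totalDegree_mul_of_isDomain h0 h0] at h
  omega

lemma totalDegree_det_le {F σ X : Type*} [Field F] [Fintype X] [DecidableEq X] (q : ℕ)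
    (M : Matrix (X ⊕ Fin q) (X ⊕ Fin q) (MvPolynomial σ F))
    (h11 : ∀ x y, (M (Sum.inl x) (Sum.inl y)).totalDegree = 0)
    (h1 : ∀ u v, (M u v).totalDegree ≤ 1) : M.det.totalDegree ≤ 2 * q := by
  let g : X ⊕ Fin q → ℕ := Sum.elim (fun _ => 0) (fun _ => 1)
  have hg : ∑ i, g i = q := by simp [g]
  have hM : ∀ u v, (M u v).totalDegree ≤ g u + g v := by
    rintro (u | u) (v | v)
    · simp [g, h11]
    all_goals have := h1; simp only [g, Sum.elim_inl, Sum.elim_inr]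
    · exact h1 _ _
    · exact h1 _ _
    · exact (h1 _ _).trans (by norm_num)
  rw [Matrix.det_apply]
  apply MvPolynomial.totalDegree_finsetSum_le
  intro s _
  refine (MvPolynomial.totalDegree_smul_le _ _).trans ?_
  refine (MvPolynomial.totalDegree_finsetProd _ _).trans ?_
  refine (Finset.sum_le_sum fun i _ => hM (s i) i).trans ?_
  rw [Finset.sum_add_distrib, Equiv.sum_comp s g, hg]; omega

/-- Evaluation at `z` of a polynomial of degree at most `q` factors through the vector of
monomials of degree `q` in the variables and `1`. -/
noncomputable def monoVec {F σ : Type*} [Field F] (q : ℕ) (z : σ → F) (s : Sym (Option σ) q) : F :=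
  ((s : Multiset (Option σ)).map (fun o => o.elim 1 z)).prod

lemma exists_functional {F σ : Type*} [Field F] [Fintype σ] [DecidableEq σ] (q : ℕ)
    (p : MvPolynomial σ F)
    (hp : p.totalDegree ≤ q) :
    ∃ L : (Sym (Option σ) q → F) →ₗ[F] F, ∀ z, MvPolynomial.eval z p = L (monoVec q z) := by
  classical
  have key : ∀ m ∈ p.support, ∃ s : Sym (Option σ) q, ∀ z : σ → F,
      monoVec q z s = ∏ i ∈ m.support, z i ^ m i := by
    intro m hm
    have hle := (MvPolynomial.le_totalDegree hm).trans hp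
    have hc : (Finsupp.toMultiset m).card ≤ q := by
      rw [Finsupp.card_toMultiset]; exact hle
    refine ⟨⟨(Finsupp.toMultiset m).map some + Multiset.replicate (q - (Finsupp.toMultiset m).card) none, by
      rw [Multiset.card_add, Multiset.card_map, Multiset.card_replicate]; omega⟩, ?_⟩
    intro z
    simp only [monoVec, Sym.coe_mk, Multiset.map_add, Multiset.prod_add, Multiset.map_map,
      Multiset.map_replicate, Multiset.prod_replicate, Option.elim_none, one_pow, mul_one]
    change (Multiset.map z _).prod = _
    rw [Finsupp.toMultiset_map, Finsupp.prod_toMultiset, Finsupp.prod_mapDomain_index]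
    · rfl
    · simp
    · intros; rw [pow_add]
  choose! s hs using key
  refine ⟨∑ m ∈ p.support, p.coeff m • LinearMap.proj (s m), fun z => ?_⟩
  rw [MvPolynomial.eval_eq, LinearMap.sum_apply]
  refine Finset.sum_congr rfl fun m hm => ?_
  simp [hs m hm]

lemma exists_small_span {F ι α : Type*} [Field F] [Fintype ι] [DecidableEq α] (S : Finset α)
    (v : α → ι → F) : ∃ S' ⊆ S, S'.card ≤ Fintype.card ι ∧
      ∀ a ∈ S, v a ∈ Submodule.span F (v '' (S' : Set α)) := by
  classical
  obtain ⟨κ, a, ha, hsp, hli⟩ := exists_linearIndependent' F (fun s : S => v s)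
  have : Finite κ := Finite.of_injective a ha
  have := Fintype.ofFinite κ
  refine ⟨Finset.univ.image (fun k => (a k : α)), ?_, ?_, ?_⟩
  · intro x hx
    simp only [Finset.mem_image] at hx
    obtain ⟨k, -, rfl⟩ := hx
    exact (a k).2
  · refine Finset.card_image_le.trans ?_
    have := hli.fintype_card_le_finrank
    simpa using this
  · intro b hb
    have : v b ∈ Submodule.span F (Set.range fun s : S => v s) :=
      Submodule.subset_span ⟨⟨b, hb⟩, rfl⟩
    rw [← hsp] at this
    have himg : v '' ((Finset.univ.image (fun k => (a k : α)) : Finset α) : Set α)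
        = Set.range ((fun s : S => v s) ∘ a) := by
      rw [Finset.coe_image, Finset.coe_univ, Set.image_univ, ← Set.range_comp]
      rfl
    rw [himg]
    exact this

lemma rank_factor {F V W : Type*} [Field F] [Fintype V] [Fintype W] [DecidableEq W]
    (B : Matrix V W F) (k : ℕ)
    (hk : B.rank = k) : ∃ (w : V → Fin k → F) (u : W → Fin k → F),
      ∀ x y, B x y = ∑ l, u y l * w x l := by
  let b := Module.finBasisOfFinrankEq F (LinearMap.range B.mulVecLin) hk
  have hmem : ∀ y, B.col y ∈ LinearMap.range B.mulVecLin := fun y =>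
    ⟨Pi.single y 1, by simp⟩
  refine ⟨fun x l => (b l : V → F) x, fun y l => b.repr ⟨B.col y, hmem y⟩ l, fun x y => ?_⟩
  have := congrArg (LinearMap.range B.mulVecLin).subtype (b.sum_repr ⟨B.col y, hmem y⟩)
  rw [map_sum] at this
  have := congrFun this x
  rw [Finset.sum_apply] at this
  simp only [map_smul, Pi.smul_apply, smul_eq_mul, Submodule.subtype_apply] at this
  exact this.symm

/-- Index type of the variables. -/
abbrev GenVar (k q : ℕ) : Type := (Fin q × Fin k) ⊕ (Σ j : Fin q, Fin j)

lemma card_genVar (k q : ℕ) : Fintype.card (GenVar k q) = q * k + q * (q - 1) / 2 := by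
  simp only [GenVar, Fintype.card_sum, Fintype.card_prod, Fintype.card_fin, Fintype.card_sigma]
  rw [Fin.sum_univ_eq_sum_range (fun j => j) q, Finset.sum_range_id]

/-- The generic skew-symmetric matrix. -/
noncomputable def genMat {F V : Type*} [Field F] (A : Matrix V V F) (k q : ℕ)
    (u : V → Fin k → F) (X : Finset V) :
    Matrix (↥X ⊕ Fin q) (↥X ⊕ Fin q) (MvPolynomial (GenVar k q) F)
  | Sum.inl x, Sum.inl y => MvPolynomial.C (A x y)
  | Sum.inr i, Sum.inl x => ∑ l, MvPolynomial.C (u x l) * MvPolynomial.X (Sum.inl (i, l))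
  | Sum.inl x, Sum.inr i => - ∑ l, MvPolynomial.C (u x l) * MvPolynomial.X (Sum.inl (i, l))
  | Sum.inr i, Sum.inr j =>
      if h : i < j then MvPolynomial.X (Sum.inr ⟨j, ⟨i, h⟩⟩)
      else if h : j < i then - MvPolynomial.X (Sum.inr ⟨i, ⟨j, h⟩⟩) else 0

lemma genMat_skew {F V : Type*} [Field F] (A : Matrix V V F) (hskew : ∀ u v, A u v = - A v u)
    (k q : ℕ) (u : V → Fin k → F) (X : Finset V) (a b) :
    genMat A k q u X a b = - genMat A k q u X b a := by
  rcases a with a | a <;> rcases b with b | b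
  · simp only [genMat]; rw [hskew, map_neg]
  · simp only [genMat]
  · simp only [genMat, neg_neg]
  · simp only [genMat]
    rcases lt_trichotomy a b with h | h | h
    · simp [h, h.not_gt]
    · simp [h]
    · simp [h, h.not_gt]

lemma genMat_diag {F V : Type*} [Field F] (A : Matrix V V F) (hdiag : ∀ v, A v v = 0)
    (k q : ℕ) (u : V → Fin k → F) (X : Finset V) (a) :
    genMat A k q u X a a = 0 := by
  rcases a with a | a <;> simp [genMat, hdiag]

lemma genMat_degree {F V : Type*} [Field F] (A : Matrix V V F)
    (k q : ℕ) (u : V → Fin k → F) (X : Finset V) (a b) :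
    (genMat A k q u X a b).totalDegree ≤ 1 := by
  have hsum : ∀ (x : V) (i : Fin q), (∑ l, MvPolynomial.C (u x l) *
      (MvPolynomial.X (Sum.inl (i, l)) : MvPolynomial (GenVar k q) F)).totalDegree ≤ 1 := by
    intro x i
    apply MvPolynomial.totalDegree_finsetSum_le
    intro l _
    refine (MvPolynomial.totalDegree_mul _ _).trans ?_
    simp
  rcases a with a | a <;> rcases b with b | b
  · simp [genMat]
  · simp only [genMat, MvPolynomial.totalDegree_neg]; exact hsum _ _
  · simp only [genMat]; exact hsum _ _
  · simp only [genMat]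
    split_ifs <;> simp

/-- The evaluation point attached to a list of `q` elements of `V`. -/
def evPt {F V : Type*} [Field F] (A : Matrix V V F) (k q : ℕ)
    (w : V → Fin k → F) (e : Fin q → V) : GenVar k q → F :=
  Sum.elim (fun p => w (e p.1) p.2) (fun p => A (e ⟨p.2, p.2.2.trans p.1.2⟩) (e p.1))

lemma genMat_eval {F V : Type*} [Field F] [DecidableEq V] (A : Matrix V V F) (hskew : ∀ u v, A u v = - A v u)
    (hdiag : ∀ v, A v v = 0)
    (k q : ℕ) (u w : V → Fin k → F) (X : Finset V)
    (hX : ∀ x ∈ X, ∀ v, A v x = ∑ l, u x l * w v l) (e : Fin q → V) :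
    (MvPolynomial.eval (evPt A k q w e)).mapMatrix (genMat A k q u X) =
      A.submatrix (Sum.elim (fun x : X => (x : V)) e) (Sum.elim (fun x : X => (x : V)) e) := by
  ext a b
  rcases a with a | a <;> rcases b with b | b
  · simp [genMat]
  · simp [genMat, evPt]
    rw [hskew, hX a a.2]
  · simp [genMat, evPt]
    rw [hX b b.2]
  · simp only [RingHom.mapMatrix_apply, Matrix.map_apply, genMat, Matrix.submatrix_apply,
      Sum.elim_inr]
    rcases lt_trichotomy a b with h | h | h
    · simp [h, evPt]
    · simp [h, hdiag]
    · simp [h, h.not_gt, evPt]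
      rw [hskew, neg_neg]

lemma extendsIn_iff {F V : Type*} [Field F] [DecidableEq V] (A : Matrix V V F)
    (q : ℕ) (X Y : Finset V) (e : Fin q ≃ Y) :
    ExtendsIn A X Y ↔ (A.submatrix (Sum.elim (fun x : X => (x : V)) (fun i => (e i : V)))
      (Sum.elim (fun x : X => (x : V)) (fun i => (e i : V)))).det ≠ 0 := by
  unfold ExtendsIn
  by_cases h : X ∩ Y = ∅
  · have hdis : Disjoint X Y := Finset.disjoint_iff_inter_eq_empty.mpr h
    let g : ↥X ⊕ Fin q → ↥(X ∪ Y) := Sum.elim (fun x => ⟨x, Finset.mem_union_left _ x.2⟩)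
      (fun i => ⟨e i, Finset.mem_union_right _ (e i).2⟩)
    have hg : Function.Bijective g := by
      constructor
      · rintro (a | a) (b | b) hab
        · simp [g] at hab; rw [hab]
        · simp [g] at hab
          exact absurd (e b).2 (Finset.disjoint_left.mp hdis (hab ▸ a.2))
        · simp [g] at hab
          exact absurd (e a).2 (Finset.disjoint_left.mp hdis (hab ▸ b.2))
        · simp [g] at hab; rw [hab]
      · rintro ⟨v, hv⟩
        rcases Finset.mem_union.mp hv with hv | hv
        · exact ⟨Sum.inl ⟨v, hv⟩, rfl⟩
        · exact ⟨Sum.inr (e.symm ⟨v, hv⟩), by simp [g]⟩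
    have : A.submatrix (Sum.elim (fun x : X => (x : V)) (fun i => (e i : V)))
      (Sum.elim (fun x : X => (x : V)) (fun i => (e i : V))) =
        (principalSub A (X ∪ Y)).submatrix (Equiv.ofBijective g hg) (Equiv.ofBijective g hg) := by
      ext a b
      rcases a with a | a <;> rcases b with b | b <;> rfl
    rw [this, Matrix.det_submatrix_equiv_self]
    simp [h]
  · obtain ⟨x, hx⟩ := Finset.nonempty_iff_ne_empty.mpr h
    rw [Finset.mem_inter] at hx
    have : (A.submatrix (Sum.elim (fun x : X => (x : V)) (fun i => (e i : V)))
      (Sum.elim (fun x : X => (x : V)) (fun i => (e i : V)))).det = 0 := by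
      apply Matrix.det_zero_of_row_eq (i := Sum.inl ⟨x, hx.1⟩) (j := Sum.inr (e.symm ⟨x, hx.2⟩))
      · simp
      · ext b; simp [Matrix.row_apply]
    simp [h, this]

/-- Delta-matroid representative sets, rank version.
Let `A` be a skew-symmetric matrix over a field `F` indexed by a finite set `V`,
`T ⊆ V`, `k` the rank of the column submatrix `A[·,T]`, and `𝒮` a family of
`q`-element subsets of `V`. Then there exists `𝒮' ⊆ 𝒮` with
`|𝒮'| ≤ C(2·k·q + q·(q−1)/2 + q, q)` such that for every `X ⊆ T`: if some `Y ∈ 𝒮`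
extends `X` w.r.t. `A`, then some `Y' ∈ 𝒮'` extends `X` w.r.t. `A`. -/
theorem stmt_6 {F : Type*} [Field F] {V : Type*} [Fintype V] [DecidableEq V]
    (A : Matrix V V F) (hskew : ∀ u v, A u v = - A v u) (hdiag : ∀ v, A v v = 0)
    (T : Finset V) (k q : ℕ)
    (hk : (A.submatrix id (fun t : ↥T => (t : V))).rank = k)
    (𝒮 : Finset (Finset V)) (h𝒮 : ∀ Y ∈ 𝒮, Y.card = q) :
    ∃ 𝒮' ⊆ 𝒮, 𝒮'.card ≤ (2 * k * q + q * (q - 1) / 2 + q).choose q ∧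
      ∀ X ⊆ T, (∃ Y ∈ 𝒮, ExtendsIn A X Y) → ∃ Y' ∈ 𝒮', ExtendsIn A X Y' := by
  classical
  obtain ⟨w, u0, hwu⟩ := rank_factor _ k hk
  let u : V → Fin k → F := fun v => if h : v ∈ T then u0 ⟨v, h⟩ else 0
  have hu : ∀ x ∈ T, ∀ v, A v x = ∑ l, u x l * w v l := by
    intro x hx v
    have := hwu v ⟨x, hx⟩
    simpa [u, hx] using this
  let pt : Finset V → GenVar k q → F := fun Y =>
    if h : Y.card = q then evPt A k q w (fun i => ((Y.equivFinOfCardEq h).symm i : V)) else 0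
  obtain ⟨S', hS', hcard, hspan⟩ := exists_small_span 𝒮 (fun Y => monoVec q (pt Y))
  refine ⟨S', hS', hcard.trans ?_, ?_⟩
  · rw [Sym.card_sym_eq_choose, Fintype.card_option, card_genVar]
    apply Nat.choose_le_choose
    have : q * k ≤ 2 * k * q := by nlinarith [Nat.zero_le (q * k)]
    omega
  intro X hX ⟨Y, hY, hext⟩
  obtain ⟨p, hp⟩ := det_alt_sq_poly (genMat A k q u X) (genMat_skew A hskew k q u X)
    (genMat_diag A hdiag k q u X)
  have hdeg : p.totalDegree ≤ q := by
    apply totalDegree_of_sq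
    rw [← hp]
    exact totalDegree_det_le q _ (fun x y => by simp [genMat]) (genMat_degree A k q u X)
  obtain ⟨L, hL⟩ := exists_functional q p hdeg
  have key : ∀ Z ∈ 𝒮, (ExtendsIn A X Z ↔ L (monoVec q (pt Z)) ≠ 0) := by
    intro Z hZ
    rw [extendsIn_iff A q X Z (Z.equivFinOfCardEq (h𝒮 Z hZ)).symm,
      ← genMat_eval A hskew hdiag k q u w X (fun x hx => hu x (hX hx)), ← RingHom.map_det, hp,
      map_pow, ← hL]
    simp [pt, h𝒮 Z hZ]
  by_contra! hno
  have hzero : Submodule.span F ((fun Y => monoVec q (pt Y)) '' (S' : Set (Finset V)))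
      ≤ LinearMap.ker L := by
    rw [Submodule.span_le]
    rintro _ ⟨Z, hZ, rfl⟩
    have := hno Z hZ
    rw [key Z (hS' hZ), not_not] at this
    exact this
  exact (key Y hY).mp hext (hzero (hspan Y hY))
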